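/- Let 0 < δ < 1, let F(x,y,z) = (−y/(x²+y²), x/(x²+y²), 0), and set G = F ∘ r̂ (which is well defined on a neighborhood of ∂D̂, since r̂(∂D̂) does not meet the z-axis). Then ∮_{∂D̂} (G · r̂_u) du + (G · r̂_t) dt = 4π. -/

import Mathlib

open Real Set

noncomputable def dot3 (a b : Fin 3 → ℝ) : ℝ := a 0 * b 0 + a 1 * b 1 + a 2 * b 2

noncomputable def cross3 (a b : Fin 3 → ℝ) : Fin 3 → ℝ :=
  ![a 1 * b 2 - a 2 * b 1, a 2 * b 0 - a 0 * b 2, a 0 * b 1 - a 1 * b 0]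

noncomputable def pdu {E : Type*} [NormedAddCommGroup E] [NormedSpace ℝ E]
    (f : ℝ × ℝ → E) (p : ℝ × ℝ) : E := fderiv ℝ f p (1, 0)

noncomputable def pdv {E : Type*} [NormedAddCommGroup E] [NormedSpace ℝ E]
    (f : ℝ × ℝ → E) (p : ℝ × ℝ) : E := fderiv ℝ f p (0, 1)

noncomputable def curl3 (F : (Fin 3 → ℝ) → (Fin 3 → ℝ)) (q : Fin 3 → ℝ) : Fin 3 → ℝ :=
  ![fderiv ℝ F q (Pi.single 1 1) 2 - fderiv ℝ F q (Pi.single 2 1) 1,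
    fderiv ℝ F q (Pi.single 2 1) 0 - fderiv ℝ F q (Pi.single 0 1) 2,
    fderiv ℝ F q (Pi.single 0 1) 1 - fderiv ℝ F q (Pi.single 1 1) 0]

noncomputable def lineInt (P Q : ℝ × ℝ → ℝ) (a b c d : ℝ) : ℝ :=
  (∫ u in a..b, P (u, c)) + (∫ v in c..d, Q (b, v))
    - (∫ u in a..b, P (u, d)) - (∫ v in c..d, Q (a, v))

noncomputable def mob (p : ℝ × ℝ) : Fin 3 → ℝ :=
  ![(1 + p.2 * Real.cos (p.1 / 2)) * Real.cos p.1,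
    (1 + p.2 * Real.cos (p.1 / 2)) * Real.sin p.1,
    p.2 * Real.sin (p.1 / 2)]

noncomputable def rhat (δ : ℝ) (p : ℝ × ℝ) : Fin 3 → ℝ :=
  (1 - p.2) • mob (p.1, δ) + p.2 • mob (2 * π - p.1, δ)

/-!
The field `F` is `∇θ` in cylindrical coordinates `(ρ, θ, z)`, so its integral along a curve that
avoids the `z`-axis is the increment of `θ`. Since `r(u, δ)` has `ρ = 1 + δ cos (u / 2) > 0` and
`θ = u`, the edge `t = 0` of `D̂` contributes `2π`, and the edge `t = 1`, where `θ = 2π - u`,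
contributes `2π` as well, being traversed backwards. The vertical edges contribute nothing: as
`r(·, δ)` has period `4π`, the points `r(u, δ)` and `r(2π - u, δ)` coincide for `u = ± π`, and `r̂`
collapses each of these edges to a point.
-/

section PartialDerivatives

variable {E : Type*} [NormedAddCommGroup E] [NormedSpace ℝ E] {f : ℝ × ℝ → E} {u t : ℝ}

lemma hasDerivAt_pdu (hf : DifferentiableAt ℝ f (u, t)) :
    HasDerivAt (fun s => f (s, t)) (pdu f (u, t)) u :=
  hf.hasFDerivAt.comp_hasDerivAt u ((hasDerivAt_id u).prodMk (hasDerivAt_const u t))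

lemma hasDerivAt_pdv (hf : DifferentiableAt ℝ f (u, t)) :
    HasDerivAt (fun s => f (u, s)) (pdv f (u, t)) t :=
  hf.hasFDerivAt.comp_hasDerivAt t ((hasDerivAt_const t u).prodMk (hasDerivAt_id t))

lemma pdv_eq_zero_of_forall_eq {c : E} (hf : DifferentiableAt ℝ f (u, t))
    (hc : ∀ s, f (u, s) = c) : pdv f (u, t) = 0 := by
  have hderiv := hasDerivAt_pdv hf
  simp only [hc] at hderiv
  exact hderiv.unique (hasDerivAt_const t c)

end PartialDerivatives

section AngularField

/-- The gradient of the cylindrical angle around the `z`-axis; on the axis itself it takes the junk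
value `0`. -/
noncomputable def angularField (q : Fin 3 → ℝ) : Fin 3 → ℝ :=
  ![-q 1 / (q 0 ^ 2 + q 1 ^ 2), q 0 / (q 0 ^ 2 + q 1 ^ 2), 0]

lemma dot3_angularField (q v : Fin 3 → ℝ) :
    dot3 (angularField q) v = (q 0 * v 1 - q 1 * v 0) / (q 0 ^ 2 + q 1 ^ 2) := by
  simp only [dot3, angularField, Matrix.cons_val]
  ring

variable {γ γ' : ℝ → Fin 3 → ℝ} {ρ θ θ' : ℝ → ℝ}

lemma dot3_angularField_eq_deriv_angle {v : Fin 3 → ℝ} {s ω : ℝ}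
    (hx : ∀ s, γ s 0 = ρ s * cos (θ s)) (hy : ∀ s, γ s 1 = ρ s * sin (θ s))
    (hγ : HasDerivAt γ v s) (hρ : DifferentiableAt ℝ ρ s) (hρ0 : ρ s ≠ 0)
    (hθ : HasDerivAt θ ω s) : dot3 (angularField (γ s)) v = ω := by
  have hγi := hasDerivAt_pi.1 hγ
  have hv0 : v 0 = deriv ρ s * cos (θ s) + ρ s * (-sin (θ s) * ω) :=
    (hγi 0).unique <| by simpa only [hx] using hρ.hasDerivAt.fun_mul hθ.cos
  have hv1 : v 1 = deriv ρ s * sin (θ s) + ρ s * (cos (θ s) * ω) :=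
    (hγi 1).unique <| by simpa only [hy] using hρ.hasDerivAt.fun_mul hθ.sin
  have hnorm : γ s 0 ^ 2 + γ s 1 ^ 2 = ρ s ^ 2 := by
    rw [hx, hy]
    linear_combination ρ s ^ 2 * sin_sq_add_cos_sq (θ s)
  rw [dot3_angularField, hnorm, div_eq_iff (pow_ne_zero 2 hρ0), hx, hy, hv0, hv1]
  linear_combination ρ s ^ 2 * ω * sin_sq_add_cos_sq (θ s)

lemma integral_dot3_angularField_eq_sub {a b : ℝ}
    (hx : ∀ s, γ s 0 = ρ s * cos (θ s)) (hy : ∀ s, γ s 1 = ρ s * sin (θ s))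
    (hγ : ∀ s ∈ uIcc a b, HasDerivAt γ (γ' s) s)
    (hρ : ∀ s ∈ uIcc a b, DifferentiableAt ℝ ρ s) (hρ0 : ∀ s ∈ uIcc a b, ρ s ≠ 0)
    (hθ : ∀ s ∈ uIcc a b, HasDerivAt θ (θ' s) s)
    (hθ' : IntervalIntegrable θ' MeasureTheory.volume a b) :
    ∫ s in a..b, dot3 (angularField (γ s)) (γ' s) = θ b - θ a := by
  rw [← intervalIntegral.integral_eq_sub_of_hasDerivAt hθ hθ']
  exact intervalIntegral.integral_congr fun s hs =>
    dot3_angularField_eq_deriv_angle hx hy (hγ s hs) (hρ s hs) (hρ0 s hs) (hθ s hs)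

end AngularField

section Mob

lemma differentiable_mob : Differentiable ℝ mob := by
  refine differentiable_pi.2 fun i => ?_
  fin_cases i <;> simp only [mob, Fin.reduceFinMk, Matrix.cons_val] <;> fun_prop

lemma mob_periodic (v : ℝ) : Function.Periodic (fun u => mob (u, v)) (4 * π) := by
  intro u
  have hhalf : (u + 4 * π) / 2 = u / 2 + 2 * π := by ring
  have hfull : u + 4 * π = u + 2 * π + 2 * π := by ring
  simp only [mob, hhalf, cos_add_two_pi, sin_add_two_pi]
  simp only [hfull, cos_add_two_pi, sin_add_two_pi]

lemma one_add_mul_cos_pos {δ : ℝ} (hδ : |δ| < 1) (x : ℝ) : 0 < 1 + δ * cos x := by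
  have hle : |δ * cos x| ≤ |δ| := by
    rw [abs_mul]
    exact mul_le_of_le_one_right (abs_nonneg δ) (abs_cos_le_one x)
  linarith [neg_abs_le (δ * cos x)]

lemma integral_dot3_angularField_mob {δ : ℝ} (hδ : |δ| < 1) {γ γ' : ℝ → Fin 3 → ℝ}
    {φ φ' : ℝ → ℝ} {a b : ℝ} (hmob : ∀ s, γ s = mob (φ s, δ))
    (hγ : ∀ s ∈ uIcc a b, HasDerivAt γ (γ' s) s) (hφ : ∀ s ∈ uIcc a b, HasDerivAt φ (φ' s) s)
    (hφ' : IntervalIntegrable φ' MeasureTheory.volume a b) :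
    ∫ s in a..b, dot3 (angularField (γ s)) (γ' s) = φ b - φ a := by
  refine integral_dot3_angularField_eq_sub (ρ := fun s => 1 + δ * cos (φ s / 2))
    (fun s => ?_) (fun s => ?_) hγ (fun s hs => ?_)
    (fun s _ => (one_add_mul_cos_pos hδ (φ s / 2)).ne') hφ hφ'
  · simp only [hmob, mob, Matrix.cons_val]
  · simp only [hmob, mob, Matrix.cons_val]
  · have := (hφ s hs).differentiableAt
    fun_prop

end Mob

section Rhat

variable (δ : ℝ)

lemma differentiable_rhat : Differentiable ℝ (rhat δ) := by
  have := differentiable_mob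
  unfold rhat
  fun_prop

lemma rhat_zero_right (u : ℝ) : rhat δ (u, 0) = mob (u, δ) := by simp [rhat]

lemma rhat_one_right (u : ℝ) : rhat δ (u, 1) = mob (2 * π - u, δ) := by simp [rhat]

variable {δ} in
lemma rhat_eq_mob_of_mob_two_pi_sub_eq {u : ℝ} (h : mob (2 * π - u, δ) = mob (u, δ)) (t : ℝ) :
    rhat δ (u, t) = mob (u, δ) := by
  simp only [rhat, h, ← add_smul, sub_add_cancel, one_smul]

lemma rhat_pi_left (t : ℝ) : rhat δ (π, t) = mob (π, δ) := by
  have hreflect : 2 * π - π = π := by ring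
  exact rhat_eq_mob_of_mob_two_pi_sub_eq (by rw [hreflect]) t

lemma rhat_neg_pi_left (t : ℝ) : rhat δ (-π, t) = mob (-π, δ) := by
  have hreflect : 2 * π - -π = -π + 4 * π := by ring
  exact rhat_eq_mob_of_mob_two_pi_sub_eq (by rw [hreflect]; exact mob_periodic δ (-π)) t

end Rhat

theorem stmt17 (δ : ℝ) (hδ0 : 0 < δ) (hδ1 : δ < 1)
    (F : (Fin 3 → ℝ) → (Fin 3 → ℝ))
    (hF : F = fun q => ![-q 1 / (q 0 ^ 2 + q 1 ^ 2), q 0 / (q 0 ^ 2 + q 1 ^ 2), 0])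
    (G : ℝ × ℝ → Fin 3 → ℝ) (hG : G = F ∘ rhat δ) :
    lineInt (fun p => dot3 (G p) (pdu (rhat δ) p)) (fun p => dot3 (G p) (pdv (rhat δ) p))
        (-π) π 0 1 = 4 * π := by
  subst hF hG
  have hdiff := differentiable_rhat δ
  have hδ : |δ| < 1 := abs_lt.2 ⟨by linarith, hδ1⟩
  have bottom : ∫ u in -π..π, dot3 (angularField (rhat δ (u, 0))) (pdu (rhat δ) (u, 0))
      = π - -π :=
    integral_dot3_angularField_mob hδ (rhat_zero_right δ) (fun u _ => hasDerivAt_pdu (hdiff (u, 0)))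
      (fun u _ => hasDerivAt_id u) intervalIntegrable_const
  have top : ∫ u in -π..π, dot3 (angularField (rhat δ (u, 1))) (pdu (rhat δ) (u, 1))
      = (2 * π - π) - (2 * π - -π) :=
    integral_dot3_angularField_mob hδ (rhat_one_right δ) (fun u _ => hasDerivAt_pdu (hdiff (u, 1)))
      (fun u _ => (hasDerivAt_id u).const_sub (2 * π)) intervalIntegrable_const
  have right (t : ℝ) : pdv (rhat δ) (π, t) = 0 :=
    pdv_eq_zero_of_forall_eq (hdiff (π, t)) (rhat_pi_left δ)
  have left (t : ℝ) : pdv (rhat δ) (-π, t) = 0 :=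
    pdv_eq_zero_of_forall_eq (hdiff (-π, t)) (rhat_neg_pi_left δ)
  have dot3_zero (q : Fin 3 → ℝ) : dot3 q 0 = 0 := by simp [dot3]
  change lineInt (fun p => dot3 (angularField (rhat δ p)) (pdu (rhat δ) p))
    (fun p => dot3 (angularField (rhat δ p)) (pdv (rhat δ) p)) (-π) π 0 1 = 4 * π
  simp only [lineInt, bottom, top, left, right, dot3_zero, intervalIntegral.integral_zero]
  ring
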